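/- arXiv:1710.01836 — 3 statements merged into one kernel-verified Lean document; each statement's English description precedes it below -/
import Mathlib

section
/- Let X₁, X₂ : ℝⁿ → ℝⁿ be continuous vector fields and let Φ¹, Φ² : ℝ × ℝⁿ → ℝⁿ be C¹ flows of X₁ and X₂ respectively (so Φⁱ(0,x) = x, Φⁱ(t+s,x) = Φⁱ(t, Φⁱ(s,x)), and ∂ₜΦⁱ(t,x) = Xᵢ(Φⁱ(t,x))). Then for every x ∈ ℝⁿ and t ≥ 0, the pseudo-linearization integral identity holds: ∫₀ᵗ (D_xΦ²)(t−s, Φ¹(s,x)) ((X₁ − X₂)(Φ¹(s,x))) ds = Φ¹(t,x) − Φ²(t,x), where D_xΦ² denotes the Fréchet derivative of Φ² in the x-variable. -/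
/-- Pseudo-linearization integral identity: if `Φ¹, Φ²` are `C¹` flows of continuous
vector fields `X₁, X₂` on `ℝⁿ`, then for every `x` and `t ≥ 0`,
`∫₀ᵗ (D_xΦ²)(t−s, Φ¹(s,x)) ((X₁ − X₂)(Φ¹(s,x))) ds = Φ¹(t,x) − Φ²(t,x)`. -/
theorem pseudo_linearization_integral_identity {n : ℕ}
    (X₁ X₂ : EuclideanSpace ℝ (Fin n) → EuclideanSpace ℝ (Fin n))
    (Φ₁ Φ₂ : ℝ → EuclideanSpace ℝ (Fin n) → EuclideanSpace ℝ (Fin n))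
    (hX₁ : Continuous X₁) (hX₂ : Continuous X₂)
    (hΦ₁ : ContDiff ℝ 1 (fun p : ℝ × EuclideanSpace ℝ (Fin n) => Φ₁ p.1 p.2))
    (hΦ₂ : ContDiff ℝ 1 (fun p : ℝ × EuclideanSpace ℝ (Fin n) => Φ₂ p.1 p.2))
    (h0₁ : ∀ x, Φ₁ 0 x = x) (h0₂ : ∀ x, Φ₂ 0 x = x)
    (hgroup₁ : ∀ t s x, Φ₁ (t + s) x = Φ₁ t (Φ₁ s x))
    (hgroup₂ : ∀ t s x, Φ₂ (t + s) x = Φ₂ t (Φ₂ s x))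
    (hflow₁ : ∀ t x, HasDerivAt (fun τ => Φ₁ τ x) (X₁ (Φ₁ t x)) t)
    (hflow₂ : ∀ t x, HasDerivAt (fun τ => Φ₂ τ x) (X₂ (Φ₂ t x)) t) :
    ∀ (x : EuclideanSpace ℝ (Fin n)) (t : ℝ), 0 ≤ t →
      ∫ s in (0 : ℝ)..t,
        fderiv ℝ (Φ₂ (t - s)) (Φ₁ s x) (X₁ (Φ₁ s x) - X₂ (Φ₁ s x))
      = Φ₁ t x - Φ₂ t x := by
  intro x t _
  set G := fun p : ℝ × EuclideanSpace ℝ (Fin n) => Φ₂ p.1 p.2 with hG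
  have hGd : ∀ p, HasFDerivAt G (fderiv ℝ G p) p := fun p =>
    ((hΦ₂.differentiable (by norm_num)) p).hasFDerivAt
  have hsp : ∀ τ y, HasFDerivAt (Φ₂ τ)
      ((fderiv ℝ G (τ, y)).comp (ContinuousLinearMap.inr ℝ ℝ (EuclideanSpace ℝ (Fin n)))) y := by
    intro τ y
    exact (hGd (τ, y)).comp y (hasFDerivAt_prodMk_right τ y)
  have hspv : ∀ τ y v, fderiv ℝ (Φ₂ τ) y v = fderiv ℝ G (τ, y) (0, v) := by
    intro τ y v
    rw [(hsp τ y).fderiv]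
    simp
  have htm : ∀ τ y, fderiv ℝ G (τ, y) (1, 0) = X₂ (Φ₂ τ y) := by
    intro τ y
    have h1 : HasDerivAt (fun σ => (σ, y)) ((1 : ℝ), (0 : EuclideanSpace ℝ (Fin n))) τ :=
      (hasDerivAt_id τ).prodMk (hasDerivAt_const τ y)
    have h2 := (hGd (τ, y)).comp_hasDerivAt τ h1
    exact h2.unique (hflow₂ τ y)
  have hinv : ∀ τ y, fderiv ℝ (Φ₂ τ) y (X₂ y) = X₂ (Φ₂ τ y) := by
    intro τ y
    have h1 : HasDerivAt (fun σ => Φ₂ σ y) (X₂ y) 0 := by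
      simpa [h0₂] using hflow₂ 0 y
    have h2 : HasFDerivAt (Φ₂ τ) (fderiv ℝ (Φ₂ τ) y) (Φ₂ 0 y) := by
      rw [h0₂]
      exact (hsp τ y).differentiableAt.hasFDerivAt
    have h3 := h2.comp_hasDerivAt (0 : ℝ) h1
    have h4 : HasDerivAt (fun σ => Φ₂ (τ + σ) y) (X₂ (Φ₂ τ y)) 0 := by
      have h5 : HasDerivAt (fun σ => Φ₂ σ y) (X₂ (Φ₂ τ y)) (τ + 0) := by
        simpa using hflow₂ τ y
      exact h5.comp_const_add τ 0
    have h6 : (fun σ => Φ₂ (τ + σ) y) = Φ₂ τ ∘ (fun σ => Φ₂ σ y) := by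
      funext σ
      exact hgroup₂ τ σ y
    rw [h6] at h4
    exact h3.unique h4
  have hF : ∀ s : ℝ, HasDerivAt (fun s => Φ₂ (t - s) (Φ₁ s x))
      (fderiv ℝ (Φ₂ (t - s)) (Φ₁ s x) (X₁ (Φ₁ s x) - X₂ (Φ₁ s x))) s := by
    intro s
    have h1 : HasDerivAt (fun s => (t - s, Φ₁ s x)) ((-1 : ℝ), X₁ (Φ₁ s x)) s :=
      ((hasDerivAt_id s).const_sub t).prodMk (hflow₁ s x)
    have h2 := (hGd (t - s, Φ₁ s x)).comp_hasDerivAt s h1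
    refine h2.congr_deriv ?_
    have h3 : ((-1 : ℝ), X₁ (Φ₁ s x)) = (0, X₁ (Φ₁ s x)) - (1, 0) := by simp
    rw [h3, map_sub, htm, map_sub, hinv, hspv]
  have hc : Continuous (fun s =>
      fderiv ℝ (Φ₂ (t - s)) (Φ₁ s x) (X₁ (Φ₁ s x) - X₂ (Φ₁ s x))) := by
    have hΦc : Continuous (fun s => Φ₁ s x) :=
      continuous_iff_continuousAt.2 fun s => (hflow₁ s x).continuousAt
    simp only [hspv]
    have hd : Continuous (fderiv ℝ G) := hΦ₂.continuous_fderiv (by norm_num)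
    exact (hd.comp ((continuous_const.sub continuous_id).prodMk hΦc)).clm_apply
      (continuous_const.prodMk ((hX₁.comp hΦc).sub (hX₂.comp hΦc)))
  rw [intervalIntegral.integral_eq_sub_of_hasDerivAt (fun s _ => hF s)
    (hc.intervalIntegrable 0 t)]
  simp [h0₁, h0₂]
end

section
/- Let A_i : ℝⁿ → Matrix d d ℝ (i = 1,…,n) be C¹ maps with curvature components F_{ij} = ∂_i A_j − ∂_j A_i + A_i·A_j − A_j·A_i. Suppose γ : ℝ → ℝⁿ is twice differentiable and ξ : ℝ → Matrix d d ℝ is differentiable, and together they solve Wong's equations for A with the Euclidean metric and the Frobenius pairing ⟨X,Y⟩ = trace(Xᵀ·Y): namely γ''_i(t) = Σ_{j=1}^n trace(F_{ij}(γ(t))ᵀ·ξ(t))·γ'_j(t) for each i, and ξ'(t) = ξ(t)·a(t) − a(t)·ξ(t) where a(t) = Σ_{i=1}^n γ'_i(t)·A_i(γ(t)). Let u : ℝⁿ → Matrix d d ℝ be a C² map with u(x)ᵀ·u(x) = 1 for all x (orthogonal gauge), and define Ã_i(x) = u(x)ᵀ·(∂_i u)(x) + u(x)ᵀ·A_i(x)·u(x)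 with curvature F̃_{ij}, and ξ̃(t) = u(γ(t))ᵀ·ξ(t)·u(γ(t)). Then (γ, ξ̃) solves Wong's equations for Ã: γ''_i(t) = Σ_{j=1}^n trace(F̃_{ij}(γ(t))ᵀ·ξ̃(t))·γ'_j(t) for each i, and ξ̃'(t) = ξ̃(t)·ã(t) − ã(t)·ξ̃(t) where ã(t) = Σ_{i=1}^n γ'_i(t)·Ã_i(γ(t)). -/
attribute [local instance] Matrix.normedAddCommGroup Matrix.normedSpace

open Matrix

/-- The `i`-th partial derivative of a matrix-valued map on `ℝⁿ`. -/
noncomputable def pder {n d : ℕ} (i : Fin n)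
    (f : (Fin n → ℝ) → Matrix (Fin d) (Fin d) ℝ) (x : Fin n → ℝ) :
    Matrix (Fin d) (Fin d) ℝ :=
  fderiv ℝ f x (Pi.single i 1)

lemma wg_mul {d : ℕ} {f g : ℝ → Matrix (Fin d) (Fin d) ℝ} {f' g' : Matrix (Fin d) (Fin d) ℝ} {t : ℝ}
    (hf : HasDerivAt f f' t) (hg : HasDerivAt g g' t) :
    HasDerivAt (fun s => f s * g s) (f' * g t + f t * g') t := by
  refine hasDerivAt_pi.2 fun a => hasDerivAt_pi.2 fun b => ?_
  have hf1 : ∀ a b, HasDerivAt (fun s => f s a b) (f' a b) t := fun a b =>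
    hasDerivAt_pi.1 (hasDerivAt_pi.1 hf a) b
  have hg1 : ∀ a b, HasDerivAt (fun s => g s a b) (g' a b) t := fun a b =>
    hasDerivAt_pi.1 (hasDerivAt_pi.1 hg a) b
  have := HasDerivAt.fun_sum (u := Finset.univ) fun k _ => (hf1 a k).mul (hg1 k b)
  simpa [Matrix.mul_apply, Finset.sum_add_distrib] using this

lemma wg_tr {d : ℕ} {f : ℝ → Matrix (Fin d) (Fin d) ℝ} {f' : Matrix (Fin d) (Fin d) ℝ} {t : ℝ}
    (hf : HasDerivAt f f' t) : HasDerivAt (fun s => (f s)ᵀ) f'ᵀ t :=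
  hasDerivAt_pi.2 fun a => hasDerivAt_pi.2 fun b => hasDerivAt_pi.1 (hasDerivAt_pi.1 hf b) a

lemma wg_dmul {n d : ℕ} {f g : (Fin n → ℝ) → Matrix (Fin d) (Fin d) ℝ}
    (hf : Differentiable ℝ f) (hg : Differentiable ℝ g) :
    Differentiable ℝ (fun x => f x * g x) := by
  refine differentiable_pi.2 fun a => differentiable_pi.2 fun b => ?_
  have hf1 : ∀ a b, Differentiable ℝ (fun s => f s a b) := fun a b =>
    differentiable_pi.1 (differentiable_pi.1 hf a) b
  have hg1 : ∀ a b, Differentiable ℝ (fun s => g s a b) := fun a b =>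
    differentiable_pi.1 (differentiable_pi.1 hg a) b
  simp only [Matrix.mul_apply]
  exact Differentiable.fun_sum fun k _ => (hf1 a k).mul (hg1 k b)

lemma wg_dtr {n d : ℕ} {f : (Fin n → ℝ) → Matrix (Fin d) (Fin d) ℝ}
    (hf : Differentiable ℝ f) : Differentiable ℝ (fun x => (f x)ᵀ) :=
  differentiable_pi.2 fun a => differentiable_pi.2 fun b =>
    differentiable_pi.1 (differentiable_pi.1 hf b) a

lemma wg_line {n d : ℕ} {f : (Fin n → ℝ) → Matrix (Fin d) (Fin d) ℝ}
    (hf : Differentiable ℝ f) (i : Fin n) (x : Fin n → ℝ) :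
    HasDerivAt (fun s : ℝ => f (x + s • Pi.single i 1)) (pder i f x) 0 := by
  have h1 : HasDerivAt (fun s : ℝ => x + s • (Pi.single i 1 : Fin n → ℝ)) (Pi.single i 1) 0 := by
    simpa using ((hasDerivAt_id (0 : ℝ)).smul_const (Pi.single i 1 : Fin n → ℝ)).const_add x
  have h2 : HasFDerivAt f (fderiv ℝ f x) (x + (0 : ℝ) • (Pi.single i 1 : Fin n → ℝ)) := by
    simpa using (hf x).hasFDerivAt
  exact h2.comp_hasDerivAt 0 h1

lemma wg_pmul {n d : ℕ} {f g : (Fin n → ℝ) → Matrix (Fin d) (Fin d) ℝ}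
    (hf : Differentiable ℝ f) (hg : Differentiable ℝ g) (i : Fin n) (x : Fin n → ℝ) :
    pder i (fun x => f x * g x) x = pder i f x * g x + f x * pder i g x := by
  have := (wg_line (wg_dmul hf hg) i x).unique (wg_mul (wg_line hf i x) (wg_line hg i x))
  simpa using this

lemma wg_ptr {n d : ℕ} {f : (Fin n → ℝ) → Matrix (Fin d) (Fin d) ℝ}
    (hf : Differentiable ℝ f) (i : Fin n) (x : Fin n → ℝ) :
    pder i (fun x => (f x)ᵀ) x = (pder i f x)ᵀ :=
  (wg_line (wg_dtr hf) i x).unique (wg_tr (wg_line hf i x))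

lemma wg_padd {n d : ℕ} {f g : (Fin n → ℝ) → Matrix (Fin d) (Fin d) ℝ}
    (hf : Differentiable ℝ f) (hg : Differentiable ℝ g) (i : Fin n) (x : Fin n → ℝ) :
    pder i (fun x => f x + g x) x = pder i f x + pder i g x := by
  have h1 := wg_line hf i x
  have h2 := wg_line hg i x
  have hd : Differentiable ℝ (fun x => f x + g x) :=
    differentiable_pi.2 fun a => differentiable_pi.2 fun b =>
      (differentiable_pi.1 (differentiable_pi.1 hf a) b).add
        (differentiable_pi.1 (differentiable_pi.1 hg a) b)
  refine (wg_line hd i x).unique ?_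
  exact hasDerivAt_pi.2 fun a => hasDerivAt_pi.2 fun b =>
    (hasDerivAt_pi.1 (hasDerivAt_pi.1 h1 a) b).add (hasDerivAt_pi.1 (hasDerivAt_pi.1 h2 a) b)

lemma wg_dpder0 {X E : Type*} [NormedAddCommGroup X] [NormedSpace ℝ X]
    [NormedAddCommGroup E] [NormedSpace ℝ E] {u : X → E}
    (hu : ContDiff ℝ 2 u) (v : X) : Differentiable ℝ (fun x => fderiv ℝ u x v) := by
  have h : ContDiff ℝ 1 (fderiv ℝ u) := hu.fderiv_right (by norm_num)
  exact (h.differentiable (by norm_num)).clm_apply (differentiable_const _)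

lemma wg_symm0 {X E : Type*} [NormedAddCommGroup X] [NormedSpace ℝ X]
    [NormedAddCommGroup E] [NormedSpace ℝ E] {u : X → E}
    (hu : ContDiff ℝ 2 u) (v w x : X) :
    fderiv ℝ (fun x => fderiv ℝ u x w) x v = fderiv ℝ (fun x => fderiv ℝ u x v) x w := by
  have h : Differentiable ℝ (fderiv ℝ u) :=
    (hu.fderiv_right (m := 1) (by norm_num)).differentiable (by norm_num)
  have key : ∀ v w, fderiv ℝ (fun x => fderiv ℝ u x w) x v = fderiv ℝ (fderiv ℝ u) x v w := by
    intro v w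
    rw [((h x).hasFDerivAt.clm_apply (hasFDerivAt_const w x)).fderiv]
    simp
  rw [key, key]
  exact (hu.contDiffAt.isSymmSndFDerivAt (by simp)) _ _

lemma wg_sum0 {n : ℕ} {E : Type*} [AddCommGroup E] [Module ℝ E] [TopologicalSpace E]
    (L : (Fin n → ℝ) →L[ℝ] E) (v : Fin n → ℝ) :
    ∑ i, v i • L (Pi.single i 1) = L v := by
  conv_rhs => rw [pi_eq_sum_univ' v]
  simp only [map_sum, map_smul]

lemma wg_dpder {n d : ℕ} {u : (Fin n → ℝ) → Matrix (Fin d) (Fin d) ℝ}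
    (hu : ContDiff ℝ 2 u) (i : Fin n) : Differentiable ℝ (pder i u) :=
  @wg_dpder0 (Fin n → ℝ) (Matrix (Fin d) (Fin d) ℝ) _ _ Matrix.normedAddCommGroup Matrix.normedSpace u hu _

lemma wg_symm {n d : ℕ} {u : (Fin n → ℝ) → Matrix (Fin d) (Fin d) ℝ}
    (hu : ContDiff ℝ 2 u) (i j : Fin n) (x : Fin n → ℝ) :
    pder i (pder j u) x = pder j (pder i u) x :=
  @wg_symm0 (Fin n → ℝ) (Matrix (Fin d) (Fin d) ℝ) _ _ Matrix.normedAddCommGroup Matrix.normedSpace u hu _ _ _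

lemma wg_tru {d : ℕ} {u U V V' : Matrix (Fin d) (Fin d) ℝ} (h1 : u * U = 1)
    (h : V' * u + U * V = 0) : V' = -(U * V * U) := by
  have : (V' * u + U * V) * U = 0 := by rw [h, zero_mul]
  rw [add_mul, mul_assoc, h1, mul_one] at this
  exact eq_neg_of_add_eq_zero_left this

lemma wg_alg {d : ℕ} {u U V W V' W' S a b p q : Matrix (Fin d) (Fin d) ℝ} (h1 : u * U = 1)
    (hV : V' = -(U * V * U)) (hW : W' = -(U * W * U)) :
    (V' * W + U * S + ((V' * b + U * p) * u + U * b * V))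
    - (W' * V + U * S + ((W' * a + U * q) * u + U * a * W))
    + (U * V + U * a * u) * (U * W + U * b * u)
    - (U * W + U * b * u) * (U * V + U * a * u) = U * (p - q + a * b - b * a) * u := by
  have h2 : ∀ z, u * (U * z) = z := fun z => by rw [← mul_assoc, h1, one_mul]
  subst hV hW
  simp only [mul_add, add_mul, mul_sub, sub_mul, neg_mul, mul_assoc, h2]
  abel

lemma wg_alg2 {d : ℕ} {u U V V' x a : Matrix (Fin d) (Fin d) ℝ} (h1 : u * U = 1)
    (hV : V' = -(U * V * U)) :
    (V' * x + U * (x * a - a * x)) * u + U * x * V =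
    U * x * u * (U * V + U * a * u) - (U * V + U * a * u) * (U * x * u) := by
  have h2 : ∀ z, u * (U * z) = z := fun z => by rw [← mul_assoc, h1, one_mul]
  subst hV
  simp only [mul_add, add_mul, mul_sub, sub_mul, neg_mul, mul_assoc, h2]
  abel

/-- Gauge covariance of Wong's equations in the Euclidean model with the Frobenius
pairing `⟨X,Y⟩ = trace(Xᵀ Y)`: if `(γ, ξ)` solves Wong's equations for `A` and `u` is an
orthogonal gauge, then `(γ, ξ̃)` with `ξ̃ = uᵀ ξ u` along `γ` solves Wong's equations for
the gauge-transformed potential `Ã = uᵀ du + uᵀ A u`. -/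
theorem wong_gauge_covariance {n d : ℕ}
    (A : Fin n → (Fin n → ℝ) → Matrix (Fin d) (Fin d) ℝ)
    (hA : ∀ i, ContDiff ℝ 1 (A i))
    (F : Fin n → Fin n → (Fin n → ℝ) → Matrix (Fin d) (Fin d) ℝ)
    (hF : ∀ i j x, F i j x =
      pder i (A j) x - pder j (A i) x + A i x * A j x - A j x * A i x)
    (γ γ' γ'' : ℝ → Fin n → ℝ)
    (hγ : ∀ t, HasDerivAt γ (γ' t) t)
    (hγ' : ∀ t, HasDerivAt γ' (γ'' t) t)
    (ξ : ℝ → Matrix (Fin d) (Fin d) ℝ)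
    (hWong1 : ∀ (t : ℝ) (i : Fin n),
      γ'' t i = ∑ j, Matrix.trace ((F i j (γ t))ᵀ * ξ t) * γ' t j)
    (hWong2 : ∀ t : ℝ, HasDerivAt ξ
      (ξ t * (∑ i, γ' t i • A i (γ t)) - (∑ i, γ' t i • A i (γ t)) * ξ t) t)
    (u : (Fin n → ℝ) → Matrix (Fin d) (Fin d) ℝ)
    (hu : ContDiff ℝ 2 u)
    (huorth : ∀ x, (u x)ᵀ * u x = 1)
    (At : Fin n → (Fin n → ℝ) → Matrix (Fin d) (Fin d) ℝ)
    (hAt : ∀ i x, At i x = (u x)ᵀ * pder i u x + (u x)ᵀ * A i x * u x)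
    (Ft : Fin n → Fin n → (Fin n → ℝ) → Matrix (Fin d) (Fin d) ℝ)
    (hFt : ∀ i j x, Ft i j x =
      pder i (At j) x - pder j (At i) x + At i x * At j x - At j x * At i x)
    (ξt : ℝ → Matrix (Fin d) (Fin d) ℝ)
    (hξt : ∀ t, ξt t = (u (γ t))ᵀ * ξ t * u (γ t)) :
    (∀ (t : ℝ) (i : Fin n),
      γ'' t i = ∑ j, Matrix.trace ((Ft i j (γ t))ᵀ * ξt t) * γ' t j) ∧
    (∀ t : ℝ, HasDerivAt ξt
      (ξt t * (∑ i, γ' t i • At i (γ t)) - (∑ i, γ' t i • At i (γ t)) * ξt t) t) := by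
  have hud : Differentiable ℝ u := hu.differentiable (by norm_num)
  have hAd : ∀ i, Differentiable ℝ (A i) := fun i => (hA i).differentiable (by norm_num)
  have huU : ∀ x, u x * (u x)ᵀ = 1 := fun x => mul_eq_one_comm.1 (huorth x)
  have hV : ∀ i x, (pder i u x)ᵀ = -((u x)ᵀ * pder i u x * (u x)ᵀ) := by
    intro i x
    refine wg_tru (huU x) ?_
    rw [← wg_ptr hud, ← wg_pmul (wg_dtr hud) hud]
    simp only [huorth]
    simp [pder]
  have hpAt : ∀ i j x, pder i (At j) x =
      (pder i u x)ᵀ * pder j u x + (u x)ᵀ * pder i (pder j u) x +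
      (((pder i u x)ᵀ * A j x + (u x)ᵀ * pder i (A j) x) * u x
        + (u x)ᵀ * A j x * pder i u x) := by
    intro i j x
    have : At j = fun x => (u x)ᵀ * pder j u x + (u x)ᵀ * A j x * u x := funext (hAt j)
    rw [this, wg_padd (wg_dmul (wg_dtr hud) (wg_dpder hu j))
      (wg_dmul (wg_dmul (wg_dtr hud) (hAd j)) hud),
      wg_pmul (wg_dtr hud) (wg_dpder hu j),
      wg_pmul (wg_dmul (wg_dtr hud) (hAd j)) hud, wg_pmul (wg_dtr hud) (hAd j), wg_ptr hud]
  have hFF : ∀ i j x, Ft i j x = (u x)ᵀ * F i j x * u x := by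
    intro i j x
    rw [hFt, hpAt, hpAt, hAt, hAt, hF, wg_symm hu j i]
    exact wg_alg (huU x) (hV i x) (hV j x)
  refine ⟨fun t i => ?_, fun t => ?_⟩
  · rw [hWong1]
    refine Finset.sum_congr rfl fun j _ => ?_
    congr 1
    have h2 : ∀ z, u (γ t) * ((u (γ t))ᵀ * z) = z := fun z => by
      rw [← mul_assoc, huU, one_mul]
    rw [hFF, hξt, Matrix.transpose_mul, Matrix.transpose_mul, Matrix.transpose_transpose]
    simp only [mul_assoc, h2]
    conv_rhs => rw [Matrix.trace_mul_comm]
    simp only [mul_assoc, huU, mul_one]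
  · have hξ' : ξt = fun t => (u (γ t))ᵀ * ξ t * u (γ t) := funext hξt
    have hs : (∑ i, γ' t i • At i (γ t)) = (u (γ t))ᵀ * (∑ i, γ' t i • pder i u (γ t))
        + (u (γ t))ᵀ * (∑ i, γ' t i • A i (γ t)) * u (γ t) := by
      simp only [hAt, smul_add, Finset.sum_add_distrib, Finset.mul_sum, Finset.sum_mul,
        Matrix.mul_smul, Matrix.smul_mul]
    have hc : HasDerivAt (fun t => u (γ t)) (∑ i, γ' t i • pder i u (γ t)) t := by
      have := (hud (γ t)).hasFDerivAt.comp_hasDerivAt t (hγ t)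
      have e : ∑ i, γ' t i • pder i u (γ t) = fderiv ℝ u (γ t) (γ' t) :=
        wg_sum0 (fderiv ℝ u (γ t)) (γ' t)
      rw [e]
      exact this
    have hVt : (∑ i, γ' t i • pder i u (γ t))ᵀ =
        -((u (γ t))ᵀ * (∑ i, γ' t i • pder i u (γ t)) * (u (γ t))ᵀ) := by
      simp only [Matrix.transpose_sum, Matrix.transpose_smul, hV, Finset.mul_sum, Finset.sum_mul,
        Matrix.mul_smul, Matrix.smul_mul, smul_neg, Finset.sum_neg_distrib]
    have := wg_mul (wg_mul (wg_tr hc) (hWong2 t)) hc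
    rw [wg_alg2 (huU _) hVt] at this
    rw [hs, hξ']
    exact this
end

section
/- Let Ω ⊆ ℝⁿ be an open connected set, let A : Ω → (ℝⁿ →L[ℝ] Matrix d d ℝ) be continuous (a continuous matrix-valued 1-form), and let w : Ω → Matrix d d ℝ be differentiable on Ω with Fréchet derivative satisfying (Dw)(x)(h) = w(x)·(A(x)(h)) − (A(x)(h))·w(x) for every x ∈ Ω and h ∈ ℝⁿ. If w(z₀) = 1 (the identity matrix) for some z₀ ∈ Ω, then w(x) = 1 for all x ∈ Ω. -/
attribute [local instance] Matrix.normedAddCommGroup Matrix.normedSpace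

theorem gauge_mul_bound {d : ℕ} (M N : Matrix (Fin d) (Fin d) ℝ) :
    ‖M * N‖ ≤ d * (‖M‖ * ‖N‖) := by
  rw [Matrix.norm_le_iff (by positivity)]
  intro i j
  rw [Matrix.mul_apply]
  refine (norm_sum_le _ _).trans ?_
  have : ∀ k ∈ (Finset.univ : Finset (Fin d)), ‖M i k * N k j‖ ≤ ‖M‖ * ‖N‖ := by
    intro k _
    rw [norm_mul]
    exact mul_le_mul (Matrix.norm_entry_le_entrywise_sup_norm M)
      (Matrix.norm_entry_le_entrywise_sup_norm N) (norm_nonneg _) (norm_nonneg _)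
  refine (Finset.sum_le_card_nsmul _ _ _ this).trans ?_
  simp

theorem gauge_bdd {X F E : Type*} [TopologicalSpace X] [NormedAddCommGroup F] [NormedSpace ℝ F]
    [NormedAddCommGroup E] [NormedSpace ℝ E] (A : X → (F →L[ℝ] E)) (x : X)
    (hA : ContinuousAt A x) : ∃ C : ℝ, ∀ᶠ y in nhds x, ∀ h, ‖A y h‖ ≤ C * ‖h‖ := by
  refine ⟨‖A x‖ + 1, ?_⟩
  have h1 : ∀ᶠ y in nhds x, ‖A y‖ < ‖A x‖ + 1 := hA.norm.eventually_lt_const (by linarith)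
  filter_upwards [h1] with y hy h
  exact ((A y).le_opNorm h).trans (mul_le_mul_of_nonneg_right hy.le (norm_nonneg _))

theorem gauge_local {n d : ℕ}
    (A : (Fin n → ℝ) → ((Fin n → ℝ) →L[ℝ] Matrix (Fin d) (Fin d) ℝ))
    (w : (Fin n → ℝ) → Matrix (Fin d) (Fin d) ℝ)
    (B : Set (Fin n → ℝ)) (hB : Convex ℝ B) (C : ℝ) (hC : ∀ x ∈ B, ∀ h, ‖A x h‖ ≤ C * ‖h‖)
    (hw : ∀ x ∈ B, DifferentiableAt ℝ w x)
    (hDw : ∀ x ∈ B, ∀ h : Fin n → ℝ,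
      fderiv ℝ w x h = w x * A x h - A x h * w x)
    (y : Fin n → ℝ) (hy : y ∈ B) (hwy : w y = 1) (x : Fin n → ℝ) (hx : x ∈ B) : w x = 1 := by
  have hmem : ∀ t ∈ Set.Icc (0:ℝ) 1, y + t • (x - y) ∈ B := fun t ht =>
    hB.add_smul_sub_mem hy hx ht
  have hder : ∀ t ∈ Set.Icc (0:ℝ) 1, HasDerivAt (fun t : ℝ => w (y + t • (x - y)) - 1)
      (fderiv ℝ w (y + t • (x - y)) (x - y)) t := by
    intro t ht
    have h1 : HasDerivAt (fun t : ℝ => y + t • (x - y)) (x - y) t := by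
      simpa using ((hasDerivAt_id t).smul_const (x - y)).const_add y
    exact ((hw _ (hmem t ht)).hasFDerivAt.comp_hasDerivAt t h1).sub_const 1
  have key := eq_zero_of_abs_deriv_le_mul_abs_self_of_eq_zero_right
    (f := fun t : ℝ => w (y + t • (x - y)) - 1)
    (f' := fun t => fderiv ℝ w (y + t • (x - y)) (x - y))
    (K := 2 * d * (C * ‖x - y‖)) (a := 0) (b := 1)
    (fun t ht => (hder t ht).continuousAt.continuousWithinAt)
    (fun t ht => (hder t (Set.Ico_subset_Icc_self ht)).hasDerivWithinAt)
    (by simp [hwy]) ?_ 1 (by simp)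
  · simpa [sub_eq_zero] using key
  · intro t ht
    have hm := hmem t (Set.Ico_subset_Icc_self ht)
    simp only [hDw _ hm]
    set p := y + t • (x - y)
    set a := A p (x - y) with ha
    have hab : ‖a‖ ≤ C * ‖x - y‖ :=
      hC _ hm _
    have e : w p * a - a * w p = (w p - 1) * a - a * (w p - 1) := by noncomm_ring
    rw [e]
    refine (norm_sub_le _ _).trans ?_
    have h1 := gauge_mul_bound (w p - 1) a
    have h2 := gauge_mul_bound a (w p - 1)
    have h3 : (d:ℝ) * ‖w p - 1‖ * ‖a‖ ≤ d * ‖w p - 1‖ * (C * ‖x - y‖) :=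
      mul_le_mul_of_nonneg_left hab (by positivity)
    linarith

/-- Uniqueness for the gauge-gluing equation: a differentiable matrix-valued map `w` on a
connected open set `Ω ⊆ ℝⁿ` with `dw = wA − Aw` which equals the identity at one point is
identically the identity on `Ω`. -/
theorem gauge_uniqueness {n d : ℕ}
    (Ω : Set (Fin n → ℝ)) (hΩo : IsOpen Ω) (hΩc : IsConnected Ω)
    (A : (Fin n → ℝ) → ((Fin n → ℝ) →L[ℝ] Matrix (Fin d) (Fin d) ℝ))
    (hA : ContinuousOn A Ω)
    (w : (Fin n → ℝ) → Matrix (Fin d) (Fin d) ℝ)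
    (hw : ∀ x ∈ Ω, DifferentiableAt ℝ w x)
    (hDw : ∀ x ∈ Ω, ∀ h : Fin n → ℝ,
      fderiv ℝ w x h = w x * A x h - A x h * w x)
    (z₀ : Fin n → ℝ) (hz₀ : z₀ ∈ Ω) (hwz₀ : w z₀ = 1) :
    ∀ x ∈ Ω, w x = 1 := by
  have loc : ∀ x ∈ Ω, ∃ r > 0, Metric.ball x r ⊆ Ω ∧
      ∀ y ∈ Metric.ball x r, w y = 1 → ∀ z ∈ Metric.ball x r, w z = 1 := by
    intro x hx
    obtain ⟨C, h1⟩ : ∃ C : ℝ, ∀ᶠ y in nhds x, ∀ h, ‖A y h‖ ≤ C * ‖h‖ :=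
      gauge_bdd A x (hA.continuousAt (hΩo.mem_nhds hx))
    obtain ⟨r, hr, hb⟩ := Metric.eventually_nhds_iff_ball.1 (h1.and (hΩo.mem_nhds hx))
    refine ⟨r, hr, fun y hy => (hb y hy).2, fun y hy hwy z hz => ?_⟩
    exact gauge_local A w (Metric.ball x r) (convex_ball x r) C
      (fun y hy => (hb y hy).1) (fun y hy => hw y (hb y hy).2)
      (fun y hy => hDw y (hb y hy).2) y hy hwy z hz
  have hsub : Ω ⊆ {x | x ∈ Ω ∧ w x = 1} := by
    refine hΩc.isPreconnected.subset_of_closure_inter_subset ?_ ⟨z₀, hz₀, hz₀, hwz₀⟩ ?_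
    · rw [Metric.isOpen_iff]
      rintro x ⟨hx, hwx⟩
      obtain ⟨r, hr, hs, h⟩ := loc x hx
      exact ⟨r, hr, fun z hz => ⟨hs hz, h x (Metric.mem_ball_self hr) hwx z hz⟩⟩
    · rintro x ⟨hxc, hx⟩
      obtain ⟨r, hr, hs, h⟩ := loc x hx
      obtain ⟨y, hy, hxy⟩ := Metric.mem_closure_iff.1 hxc r hr
      exact ⟨hx, h y (by rwa [Metric.mem_ball, dist_comm]) hy.2 x (Metric.mem_ball_self hr)⟩
  exact fun x hx => (hsub hx).2
end
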